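/- Let μ be a finite positive Borel measure on ℝ with compact infinite support whose set of accumulation points (essential support) equals [−2,2], and assume μ is regular, i.e. κ_n^{1/n} → 1 as n → ∞. Then there exists a set 𝒩 ⊆ ℕ of asymptotic density 1 such that the probability measures |p_n(x;μ)|² dμ(x) converge weakly, as n → ∞ through 𝒩, to the equilibrium measure dω(x) = dx/(π√(4−x²)) of [−2,2]; that is, for every bounded continuous function f on ℝ, ∫ f(x)|p_n(x;μ)|² dμ(x) → ∫_{−2}^{2} f(x)/(π√(4−x²)) dx as n → ∞ through 𝒩. -/

import Mathlib

/-!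
Multiplication by `x` in the basis `pₙ` is the Jacobi matrix `J` with diagonal `b n = ⟨x pₙ, pₙ⟩`
and off-diagonal `a n = ⟨x pₙ, pₙ₊₁⟩ = κₙ / κₙ₊₁`. The proof shows that `a n → 1` and `b n → 0` in
quadratic Cesàro mean, and that this forces the weak limit. No potential theory is needed.

* **Form bound** (`formBound`). For each `ε > 0` the support has only finitely many points outside
  `[-2 - ε, 2 + ε]`. At a mass point `y` the sequence `pₙ(y)` is square summable, so a bounded
  combination `∑_{n < N} v n pₙ(y)` is `o(√N)`, and therefore `⟨± J v, v⟩ ≤ 2 ‖v‖² + o(N)` for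
  bounded vectors `v` of length `N`.
* **Cesàro–Nevai property** (`cesaro_jacA`, `cesaro_jacB`). The vectors `v n = 1` and
  `v n = (-1) ^ n` give `± mean b + 2 mean a ≤ 2 + o(1)`, so the arithmetic mean of the `a n` is
  asymptotically at most `1`. Regularity says that their geometric mean tends to `1`. Near equality
  in the inequality of means yields `a n → 1` in mean, and then also `mean b → 0`. Testing with
  `1 + δ s n`, where `s n = ± 1` is the sign of `b n`, gives `mean |b| = O(δ)` for every `δ > 0`.
* **Weak convergence** (`cesaro_moment`). Consequently `x pₙ ≈ pₙ₊₁ + pₙ₋₁` in `L²(μ)` in Cesàro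
  mean, and inductively `C_k pₙ ≈ pₙ₊ₖ + pₙ₋ₖ` for the Chebyshev polynomials
  `C_k (2 cos θ) = 2 cos (k θ)`. So `∫ C_k pₙ² dμ → 0` in mean for `k ≥ 1`, which are the Chebyshev
  moments of the equilibrium measure. The Koopman–von Neumann lemma
  (`exists_density_one_of_countable`) produces one set of density one along which all these moments
  converge, and Weierstrass approximation on a compact interval containing the support passes from
  polynomials to continuous functions.
-/


open MeasureTheory Filter Topology Polynomial

noncomputable section

/-- The closed support of a measure: the set of points all of whose neighborhoods
have positive measure. -/
def measSupport {α : Type*} [TopologicalSpace α] [MeasurableSpace α] (μ : Measure α) : Set α :=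
  {x | ∀ U ∈ nhds x, μ U ≠ 0}

/-- `p` is the sequence of orthonormal polynomials for a measure `μ` on `ℝ`, with positive
leading coefficients `κ`. -/
def OrthonormalPolysR (μ : Measure ℝ) (p : ℕ → Polynomial ℝ) (κ : ℕ → ℝ) : Prop :=
  (∀ n, (p n).degree = n) ∧ (∀ n, 0 < κ n) ∧ (∀ n, (p n).leadingCoeff = κ n) ∧
  (∀ n m, ∫ x, (p n).eval x * (p m).eval x ∂μ = if n = m then 1 else 0)

/-- A set of natural numbers has asymptotic density one. -/
def hasDensityOne (S : Set ℕ) : Prop :=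
  Filter.Tendsto (fun n : ℕ => (Nat.card ↥(S ∩ Set.Icc 1 n) : ℝ) / n) Filter.atTop (nhds 1)

/-! ### Cesàro means -/

/-- `CesaroNonpos e` says that the upper limit of the Cesàro means `(e 0 + ⋯ + e (N - 1)) / N`
is at most `0`. For a nonnegative sequence it says that these means tend to `0`. -/
def CesaroNonpos (e : ℕ → ℝ) : Prop :=
  ∀ ε : ℝ, 0 < ε → ∀ᶠ N : ℕ in atTop, ∑ n ∈ Finset.range N, e n ≤ ε * N

namespace CesaroNonpos

lemma eventually_const_le (C ε : ℝ) (hε : 0 < ε) : ∀ᶠ N : ℕ in atTop, C ≤ ε * N := by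
  filter_upwards [eventually_ge_atTop ⌈C / ε⌉₊] with N hN
  have := Nat.ceil_le.1 hN
  rw [div_le_iff₀ hε] at this
  linarith

lemma of_sum_le {e : ℕ → ℝ} (C : ℝ) (h : ∀ N, ∑ n ∈ Finset.range N, e n ≤ C) :
    CesaroNonpos e := fun ε hε =>
  (eventually_const_le C ε hε).mono fun N hN => (h N).trans hN

lemma add {e f : ℕ → ℝ} (he : CesaroNonpos e) (hf : CesaroNonpos f) :
    CesaroNonpos (fun n => e n + f n) := fun ε hε => by
  filter_upwards [he (ε / 2) (half_pos hε), hf (ε / 2) (half_pos hε)] with N h1 h2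
  rw [Finset.sum_add_distrib]
  linarith

lemma const_mul {e : ℕ → ℝ} (he : CesaroNonpos e) {c : ℝ} (hc : 0 ≤ c) :
    CesaroNonpos (fun n => c * e n) := fun ε hε => by
  filter_upwards [he (ε / (c + 1)) (by positivity)] with N h1
  rw [← Finset.mul_sum]
  calc c * ∑ n ∈ Finset.range N, e n ≤ c * (ε / (c + 1) * N) := by gcongr
    _ ≤ (c + 1) * (ε / (c + 1) * N) := by gcongr; linarith
    _ = ε * N := by field_simp

lemma mono_of_le {e f : ℕ → ℝ} (hf : CesaroNonpos f) (k : ℕ) (h : ∀ n, k ≤ n → e n ≤ f n) :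
    CesaroNonpos e := fun ε hε => by
  filter_upwards [hf (ε / 2) (half_pos hε), eventually_ge_atTop k,
    eventually_const_le (∑ n ∈ Finset.range k, (e n - f n)) (ε / 2) (half_pos hε)] with N h1 h2 h3
  have h4 : ∑ n ∈ Finset.Ico k N, (e n - f n) ≤ 0 :=
    Finset.sum_nonpos fun n hn => by linarith [h n (Finset.mem_Ico.1 hn).1]
  have h5 := Finset.sum_range_add_sum_Ico (fun n => e n - f n) h2
  rw [Finset.sum_sub_distrib (s := Finset.range N)] at h5
  linarith

lemma mono {e f : ℕ → ℝ} (hf : CesaroNonpos f) (h : ∀ n, e n ≤ f n) : CesaroNonpos e :=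
  hf.mono_of_le 0 fun n _ => h n

lemma of_approx {e : ℕ → ℝ}
    (h : ∀ t : ℝ, 0 < t → t ≤ 1 → ∃ f, CesaroNonpos f ∧ ∀ n, e n ≤ t + f n) :
    CesaroNonpos e := fun ε hε => by
  obtain ⟨f, hf, hef⟩ := h (min (ε / 2) 1) (by positivity) (min_le_right _ _)
  filter_upwards [hf (ε / 2) (half_pos hε)] with N h1
  calc ∑ n ∈ Finset.range N, e n ≤ ∑ n ∈ Finset.range N, (ε / 2 + f n) :=
        Finset.sum_le_sum fun n _ => (hef n).trans (by gcongr; exact min_le_left _ _)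
    _ = N * (ε / 2) + ∑ n ∈ Finset.range N, f n := by simp [Finset.sum_add_distrib]
    _ ≤ ε * N := by linarith

lemma of_sq {e : ℕ → ℝ} (h : CesaroNonpos (fun n => e n ^ 2)) : CesaroNonpos (fun n => |e n|) := by
  refine of_approx fun t ht _ => ⟨_, h.const_mul (c := 1 / t) (by positivity), fun n => ?_⟩
  have h1 : t * |e n| ≤ t * (t + 1 / t * e n ^ 2) := by
    have : t * (t + 1 / t * e n ^ 2) = t ^ 2 + e n ^ 2 := by field_simp
    rw [this, ← sq_abs (e n)]
    nlinarith [sq_nonneg (t - |e n|), sq_nonneg t, sq_nonneg |e n|]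
  exact le_of_mul_le_mul_left h1 ht

lemma shift_add {e : ℕ → ℝ} (he : CesaroNonpos e) (h0 : ∀ n, 0 ≤ e n) (k : ℕ) :
    CesaroNonpos (fun n => e (n + k)) := fun ε hε => by
  have h1 := (tendsto_add_atTop_nat k).eventually (he (ε / 2) (half_pos hε))
  filter_upwards [h1, eventually_const_le (ε / 2 * k) (ε / 2) (half_pos hε)] with N h1 h2
  have h3 := Finset.sum_range_add (f := e) k N
  have h4 : 0 ≤ ∑ n ∈ Finset.range k, e n := Finset.sum_nonneg fun n _ => h0 n
  rw [add_comm k N] at h3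
  simp_rw [add_comm k] at h3
  push_cast at h1
  linarith

lemma shift_sub {e : ℕ → ℝ} (he : CesaroNonpos e) (h0 : ∀ n, 0 ≤ e n) (k : ℕ) :
    CesaroNonpos (fun n => e (n - k)) := fun ε hε => by
  filter_upwards [he (ε / 2) (half_pos hε), eventually_ge_atTop k,
    eventually_const_le (∑ n ∈ Finset.range k, e (n - k)) (ε / 2) (half_pos hε)] with N h1 h2 h3
  obtain ⟨m, rfl⟩ := Nat.exists_eq_add_of_le h2
  have h4 := Finset.sum_range_add (f := fun n => e (n - k)) k m
  simp only [Nat.add_sub_cancel_left] at h4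
  have h5 : ∑ n ∈ Finset.range m, e n ≤ ∑ n ∈ Finset.range (k + m), e n :=
    Finset.sum_le_sum_of_subset_of_nonneg (Finset.range_mono (by omega)) fun n _ _ => h0 n
  linarith

/-- For a nonnegative sequence the upper bound on Cesàro means is a limit. -/
lemma tendsto {e : ℕ → ℝ} (he : CesaroNonpos e) (h0 : ∀ n, 0 ≤ e n) :
    Tendsto (fun N : ℕ => (∑ n ∈ Finset.range N, e n) / N) atTop (𝓝 0) := by
  rw [Metric.tendsto_atTop']
  intro ε hε
  obtain ⟨N₀, hN₀⟩ := eventually_atTop.1 (he (ε / 2) (half_pos hε))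
  refine ⟨N₀, fun N hN => ?_⟩
  have hN0 : (0 : ℝ) < N := by exact_mod_cast (by omega : 0 < N)
  rw [Real.dist_0_eq_abs, abs_of_nonneg (by have := Finset.sum_nonneg fun n (_ : n ∈ Finset.range N) => h0 n; positivity),
    div_lt_iff₀ hN0]
  have := hN₀ N hN.le
  nlinarith

end CesaroNonpos

/-! ### Passing to a set of density one -/

/-- Koopman–von Neumann lemma for one sequence: with `G n` the supremum of the Cesàro means from
index `n` on, the exceptional set `{n | √(G n) < D n}` has density zero by Markov's inequality,
because `G` decreases. -/
lemma exists_density_one {D : ℕ → ℝ} (h0 : ∀ n, 0 ≤ D n) (h2 : ∀ n, D n ≤ 2)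
    (hD : Tendsto (fun N : ℕ => (∑ n ∈ Finset.range N, D n) / N) atTop (𝓝 0)) :
    ∃ S : Set ℕ, hasDensityOne S ∧ Tendsto D (atTop ⊓ 𝓟 S) (𝓝 0) := by
  set g : ℕ → ℝ := fun N => (∑ n ∈ Finset.range (N + 1), D n) / (N : ℝ) with hg
  have hg0 : ∀ N, 0 ≤ g N := fun N => by
    have := Finset.sum_nonneg fun n (_ : n ∈ Finset.range (N + 1)) => h0 n
    positivity
  have hgt : Tendsto g atTop (𝓝 0) := by
    have h3 : Tendsto (fun N : ℕ => (2 : ℝ) / N) atTop (𝓝 0) := tendsto_const_div_atTop_nhds_zero_nat 2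
    refine squeeze_zero hg0 (fun N => ?_) (by simpa using hD.add h3)
    simp only [hg]
    rw [Finset.sum_range_succ, add_div]
    gcongr
    exact h2 N
  have hbdd : BddAbove (Set.range g) := hgt.bddAbove_range
  have hbdd' : ∀ n, BddAbove (Set.range fun m => g (n + m)) := fun n =>
    hbdd.mono (by rintro _ ⟨m, rfl⟩; exact ⟨_, rfl⟩)
  set G : ℕ → ℝ := fun n => ⨆ m, g (n + m) with hG
  have hgG : ∀ n N, n ≤ N → g N ≤ G n := fun n N h => by
    obtain ⟨m, rfl⟩ := Nat.exists_eq_add_of_le h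
    exact le_ciSup (hbdd' n) m
  have hGt : Tendsto G atTop (𝓝 0) := by
    rw [Metric.tendsto_atTop]
    intro ε hε
    obtain ⟨N₀, hN₀⟩ := Metric.tendsto_atTop.1 hgt (ε / 2) (half_pos hε)
    refine ⟨N₀, fun n hn => ?_⟩
    have h4 : G n ≤ ε / 2 := ciSup_le fun m => by
      have := hN₀ (n + m) (by omega)
      rw [Real.dist_0_eq_abs] at this
      exact (le_abs_self _).trans this.le
    rw [Real.dist_0_eq_abs, abs_of_nonneg ((hg0 n).trans (hgG n n le_rfl))]
    linarith
  have hsG : Tendsto (fun n => √(G n)) atTop (𝓝 0) := by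
    simpa [Function.comp_def] using (Real.continuous_sqrt.tendsto 0).comp hGt
  have hsg : Tendsto (fun n => √(g n)) atTop (𝓝 0) := by
    simpa [Function.comp_def] using (Real.continuous_sqrt.tendsto 0).comp hgt
  refine ⟨{n | D n ≤ √(G n)}, ?_, ?_⟩
  · classical
    have hcount : ∀ N : ℕ, 0 < N →
        1 - √(g N) ≤ (Nat.card ↥({n | D n ≤ √(G n)} ∩ Set.Icc 1 N) : ℝ) / N := by
      intro N hN
      have hN' : (0 : ℝ) < N := by exact_mod_cast hN
      set good := (Finset.Icc 1 N).filter fun n => D n ≤ √(G n)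
      set bad := (Finset.Icc 1 N).filter fun n => ¬ D n ≤ √(G n)
      have hc1 : Nat.card ↥({n | D n ≤ √(G n)} ∩ Set.Icc 1 N) = good.card := by
        rw [Nat.card_coe_set_eq, ← Set.ncard_coe_finset]
        congr 1
        ext n
        simp only [good, Set.mem_inter_iff, Set.mem_ofPred_eq, Set.mem_Icc, Finset.coe_filter,
          Finset.mem_Icc]
        tauto
      have hc2 : good.card + bad.card = N := by
        rw [Finset.card_filter_add_card_filter_not]; simp
      have hc3 : (bad.card : ℝ) * √(g N) ≤ N * g N := by
        calc (bad.card : ℝ) * √(g N) = ∑ n ∈ bad, √(g N) := by simp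
          _ ≤ ∑ n ∈ bad, D n := by
            refine Finset.sum_le_sum fun n hn => ?_
            simp only [bad, Finset.mem_filter, Finset.mem_Icc, not_le] at hn
            exact (Real.sqrt_le_sqrt (hgG n N hn.1.2)).trans hn.2.le
          _ ≤ ∑ n ∈ Finset.range (N + 1), D n := by
            refine Finset.sum_le_sum_of_subset_of_nonneg (fun n hn => ?_) fun n _ _ => h0 n
            simp only [bad, Finset.mem_filter, Finset.mem_Icc] at hn
            simp only [Finset.mem_range]; omega
          _ = N * g N := by simp only [hg]; field_simp
      have hc4 : (bad.card : ℝ) ≤ N * √(g N) := by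
        rcases (hg0 N).eq_or_lt with h | h
        · -- all terms up to `N` vanish, so there are no bad indices
          have h5 : bad = ∅ := by
            refine Finset.filter_eq_empty_iff.2 fun n hn => ?_
            rw [not_not]
            have h6 : ∑ n ∈ Finset.range (N + 1), D n = 0 := by
              have h7 : (∑ n ∈ Finset.range (N + 1), D n) / (N : ℝ) = 0 := h.symm
              rcases div_eq_zero_iff.1 h7 with h8 | h8
              · exact h8
              · exact absurd h8 hN'.ne'
            have h7 := (Finset.sum_eq_zero_iff_of_nonneg fun n _ => h0 n).1 h6 n
              (by simp at hn ⊢; omega)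
            rw [h7]; positivity
          simp [h5]; positivity
        · have h5 : 0 < √(g N) := Real.sqrt_pos.2 h
          refine le_of_mul_le_mul_right (hc3.trans ?_) h5
          rw [mul_assoc, Real.mul_self_sqrt (hg0 N)]
      rw [hc1, le_div_iff₀ hN']
      have hc5 : (good.card : ℝ) + bad.card = N := by exact_mod_cast hc2
      nlinarith
    have hlow : Tendsto (fun N => 1 - √(g N)) atTop (𝓝 1) := by simpa using hsg.const_sub 1
    refine tendsto_of_tendsto_of_tendsto_of_le_of_le' hlow tendsto_const_nhds
      ((eventually_gt_atTop 0).mono fun N hN => hcount N hN) (Eventually.of_forall fun N => ?_)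
    refine div_le_one_of_le₀ ?_ (by positivity)
    have h9 : Nat.card ↥({n | D n ≤ √(G n)} ∩ Set.Icc 1 N) ≤ Nat.card ↥(Set.Icc 1 N) :=
      Nat.card_mono (Set.finite_Icc 1 N) Set.inter_subset_right
    have h10 : Nat.card ↥(Set.Icc 1 N) = N := by simp
    exact_mod_cast h10 ▸ h9
  · refine tendsto_of_tendsto_of_tendsto_of_le_of_le' tendsto_const_nhds
      (hsG.mono_left inf_le_left) (Eventually.of_forall h0) ?_
    exact eventually_inf_principal.2 (Eventually.of_forall fun n hn => hn)

/-- Countably many nonnegative sequences with vanishing Cesàro means tend to zero along a common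
set of density one. -/
lemma exists_density_one_of_countable {d : ℕ → ℕ → ℝ} (h0 : ∀ k n, 0 ≤ d k n)
    (hd : ∀ k, CesaroNonpos (d k)) :
    ∃ S : Set ℕ, hasDensityOne S ∧ ∀ k, Tendsto (d k) (atTop ⊓ 𝓟 S) (𝓝 0) := by
  -- the truncated sequences are merged with geometric weights
  set m : ℕ → ℕ → ℝ := fun k n => min 1 (d k n) with hm
  have hm0 : ∀ k n, 0 ≤ m k n := fun k n => le_min zero_le_one (h0 k n)
  have hm1 : ∀ k n, m k n ≤ 1 := fun k n => min_le_left _ _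
  set w : ℕ → ℝ := fun k => (1 / 2 : ℝ) ^ k with hw
  have hw0 : ∀ k, 0 < w k := fun k => by positivity
  have hws : Summable w := summable_geometric_two
  have hsum : ∀ n, Summable fun k => w k * m k n := fun n =>
    Summable.of_nonneg_of_le (fun k => mul_nonneg (hw0 k).le (hm0 k n))
      (fun k => mul_le_of_le_one_right (hw0 k).le (hm1 k n)) hws
  set D : ℕ → ℝ := fun n => ∑' k, w k * m k n with hD
  have hD0 : ∀ n, 0 ≤ D n := fun n => tsum_nonneg fun k => mul_nonneg (hw0 k).le (hm0 k n)
  have hD2 : ∀ n, D n ≤ 2 := fun n => by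
    rw [← tsum_geometric_two]
    exact (hsum n).tsum_le_tsum (fun k => mul_le_of_le_one_right (hw0 k).le (hm1 k n)) hws
  have hav : ∀ N : ℕ, (∑ n ∈ Finset.range N, D n) / N
      = ∑' k, w k * ((∑ n ∈ Finset.range N, m k n) / N) := fun N => by
    simp only [hD]
    rw [← Summable.tsum_finsetSum fun n _ => hsum n, ← tsum_div_const]
    refine tsum_congr fun k => ?_
    rw [← Finset.mul_sum, mul_div_assoc]
  have hlim : Tendsto (fun N : ℕ => (∑ n ∈ Finset.range N, D n) / N) atTop (𝓝 0) := by
    simp_rw [hav]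
    have := tendsto_tsum_of_dominated_convergence (𝓕 := (atTop : Filter ℕ))
      (f := fun N k => w k * ((∑ n ∈ Finset.range N, m k n) / N)) (g := fun _ => (0 : ℝ)) hws
      (fun k => by
        have h1 : CesaroNonpos (m k) := (hd k).mono fun n => min_le_right _ _
        simpa using (h1.tendsto (hm0 k)).const_mul (w k))
      (Eventually.of_forall fun N k => by
        have h2 : 0 ≤ ∑ n ∈ Finset.range N, m k n := Finset.sum_nonneg fun n _ => hm0 k n
        rw [Real.norm_of_nonneg (mul_nonneg (hw0 k).le (by positivity))]
        refine mul_le_of_le_one_right (hw0 k).le (div_le_one_of_le₀ ?_ (by positivity))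
        calc ∑ n ∈ Finset.range N, m k n ≤ ∑ n ∈ Finset.range N, (1 : ℝ) :=
              Finset.sum_le_sum fun n _ => hm1 k n
          _ = N := by simp)
    simpa using this
  obtain ⟨S, hS, hDS⟩ := exists_density_one hD0 hD2 hlim
  refine ⟨S, hS, fun k => ?_⟩
  have h3 : Tendsto (m k) (atTop ⊓ 𝓟 S) (𝓝 0) := by
    refine squeeze_zero (hm0 k) (fun n => ?_) (by simpa using hDS.const_mul (w k)⁻¹)
    rw [← div_eq_inv_mul, le_div_iff₀ (hw0 k), mul_comm]
    exact (hsum n).le_tsum k fun j _ => mul_nonneg (hw0 j).le (hm0 j n)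
  refine h3.congr' ?_
  filter_upwards [h3.eventually (gt_mem_nhds zero_lt_one)] with n hn
  simp only [hm] at hn ⊢
  rcases min_lt_iff.1 hn with h | h
  · exact absurd h (lt_irrefl _)
  · exact min_eq_right h.le

/-! ### Orthonormal polynomials of a moment functional -/

/-- The moment functional `L` (in the application `q ↦ ∫ q dμ`) is nonnegative on squares,
multiplication by `X` is bounded by `M` for the form `(q, r) ↦ L (q * r)`, and `p` is orthonormal
for this form, with leading coefficients `κ`. -/
structure IsOrthonormalFor (L : ℝ[X] →ₗ[ℝ] ℝ) (p : ℕ → ℝ[X]) (κ : ℕ → ℝ) (M : ℝ) : Prop where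
  nonneg : ∀ q, 0 ≤ L (q * q)
  bound : ∀ q, L ((X * q) * (X * q)) ≤ M ^ 2 * L (q * q)
  orth : ∀ n m, L (p n * p m) = if n = m then 1 else 0
  deg : ∀ n, (p n).degree = n
  lead : ∀ n, (p n).leadingCoeff = κ n
  pos : ∀ n, 0 < κ n
  M_pos : 0 < M

/-- The off-diagonal Jacobi coefficient `a n = ⟨x pₙ, pₙ₊₁⟩`. -/
def jacA (L : ℝ[X] →ₗ[ℝ] ℝ) (p : ℕ → ℝ[X]) (n : ℕ) : ℝ := L (X * p n * p (n + 1))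

/-- The diagonal Jacobi coefficient `b n = ⟨x pₙ, pₙ⟩`. -/
def jacB (L : ℝ[X] →ₗ[ℝ] ℝ) (p : ℕ → ℝ[X]) (n : ℕ) : ℝ := L (X * p n * p n)

namespace IsOrthonormalFor

variable {L : ℝ[X] →ₗ[ℝ] ℝ} {p : ℕ → ℝ[X]} {κ : ℕ → ℝ} {M : ℝ}

lemma coeff_self (h : IsOrthonormalFor L p κ M) (n : ℕ) : (p n).coeff n = κ n := by
  rw [← h.lead n, leadingCoeff, natDegree_eq_of_degree_eq_some (h.deg n)]

lemma sum_sq (h : IsOrthonormalFor L p κ M) (v : ℕ → ℝ) (N : ℕ) :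
    L ((∑ n ∈ Finset.range N, v n • p n) * (∑ n ∈ Finset.range N, v n • p n))
      = ∑ n ∈ Finset.range N, v n ^ 2 := by
  simp only [Finset.sum_mul_sum, map_sum, smul_mul_smul_comm, map_smul, h.orth, smul_eq_mul]
  refine Finset.sum_congr rfl fun n hn => ?_
  simp only [mul_ite, mul_one, mul_zero, Finset.sum_ite_eq, hn, if_true]
  ring

lemma expand (h : IsOrthonormalFor L p κ M) (n : ℕ) :
    ∀ q : ℝ[X], q.degree < n → q = ∑ i ∈ Finset.range n, L (q * p i) • p i := by
  induction n with
  | zero =>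
    intro q hq
    have : q = 0 := by
      rw [← degree_eq_bot]
      exact Nat.WithBot.lt_zero_iff.1 (by exact_mod_cast hq)
    simp [this]
  | succ n ih =>
    intro q hq
    set c := q.coeff n / κ n with hc
    have hd : (q - c • p n).degree < n := by
      rw [degree_lt_iff_coeff_zero]
      intro m hm
      rw [coeff_sub, coeff_smul, smul_eq_mul]
      rcases hm.eq_or_lt with rfl | hm
      · rw [h.coeff_self, hc, div_mul_cancel₀ _ (h.pos _).ne', sub_self]
      · rw [coeff_eq_zero_of_degree_lt (lt_of_lt_of_le hq (by exact_mod_cast hm)),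
          coeff_eq_zero_of_degree_lt (p := p n) (by rw [h.deg]; exact_mod_cast hm)]
        simp
    have hq1 := ih _ hd
    have hrest : ∀ i ∈ Finset.range n, L ((q - c • p n) * p i) • p i = L (q * p i) • p i := by
      intro i hi
      rw [sub_mul, map_sub, smul_mul_assoc, map_smul, h.orth,
        if_neg (Finset.mem_range.1 hi).ne']
      simp
    rw [Finset.sum_congr rfl hrest] at hq1
    have hq2 : q = ∑ i ∈ Finset.range n, L (q * p i) • p i + c • p n := by
      rw [← hq1]; ring
    have hcn : L (q * p n) = c := by
      have h3 : L ((q - c • p n) * p n) = 0 := by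
        rw [hq1, Finset.sum_mul, map_sum]
        refine Finset.sum_eq_zero fun i hi => ?_
        rw [smul_mul_assoc, map_smul, h.orth, if_neg (Finset.mem_range.1 hi).ne, smul_zero]
      rw [sub_mul, map_sub, smul_mul_assoc, map_smul, h.orth, if_pos rfl] at h3
      simp at h3
      linarith
    rw [Finset.sum_range_succ, hcn]
    exact hq2

lemma orth_of_degree_lt (h : IsOrthonormalFor L p κ M) {q : ℝ[X]} {n : ℕ} (hq : q.degree < n) :
    L (q * p n) = 0 := by
  rw [h.expand n q hq, Finset.sum_mul, map_sum]
  refine Finset.sum_eq_zero fun i hi => ?_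
  rw [smul_mul_assoc, map_smul, h.orth, if_neg (Finset.mem_range.1 hi).ne, smul_zero]

lemma degree_X_mul (h : IsOrthonormalFor L p κ M) (n : ℕ) : (X * p n).degree = ((n + 1 : ℕ) : WithBot ℕ) := by
  rw [degree_mul, degree_X, h.deg]
  push_cast
  rw [add_comm]

lemma X_mul_orth (h : IsOrthonormalFor L p κ M) {n m : ℕ} (hm : n + 1 < m) :
    L (X * p n * p m) = 0 :=
  h.orth_of_degree_lt (by rw [h.degree_X_mul]; exact_mod_cast hm)

lemma X_mul_orth' (h : IsOrthonormalFor L p κ M) {n m : ℕ} (hm : m + 1 < n) :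
    L (X * p n * p m) = 0 := by
  rw [show X * p n * p m = X * p m * p n by ring]
  exact h.X_mul_orth hm

/-- The three-term recurrence. -/
lemma recurrence (h : IsOrthonormalFor L p κ M) (n : ℕ) :
    X * p (n + 1) = jacA L p (n + 1) • p (n + 2) + jacB L p (n + 1) • p (n + 1)
      + jacA L p n • p n := by
  have h1 := h.expand (n + 3) (X * p (n + 1)) (by rw [h.degree_X_mul]; exact_mod_cast (by omega))
  rw [Finset.sum_range_succ, Finset.sum_range_succ, Finset.sum_range_succ,
    Finset.sum_eq_zero fun i hi => by
      rw [h.X_mul_orth' (by simpa using hi), zero_smul]] at h1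
  have h2 : L (X * p (n + 1) * p n) = jacA L p n := by
    rw [jacA]; congr 1; ring
  rw [h1, h2]
  simp only [jacA, jacB]
  abel

lemma jacA_eq (h : IsOrthonormalFor L p κ M) (n : ℕ) : jacA L p n = κ n / κ (n + 1) := by
  have hd : (X * p n - (κ n / κ (n + 1)) • p (n + 1)).degree < ((n + 1 : ℕ) : WithBot ℕ) := by
    rw [degree_lt_iff_coeff_zero]
    intro m hm
    rw [coeff_sub, coeff_smul, smul_eq_mul]
    rcases hm.eq_or_lt with rfl | hm
    · rw [coeff_X_mul, h.coeff_self, h.coeff_self, div_mul_cancel₀ _ (h.pos _).ne', sub_self]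
    · rw [coeff_eq_zero_of_degree_lt (by rw [h.degree_X_mul]; exact_mod_cast hm),
        coeff_eq_zero_of_degree_lt (p := p (n + 1)) (by rw [h.deg]; exact_mod_cast hm)]
      simp
  have h1 := h.orth_of_degree_lt hd
  rw [sub_mul, map_sub, smul_mul_assoc, map_smul, h.orth, if_pos rfl] at h1
  simp at h1
  rw [jacA]
  linarith

/-- Bessel's inequality for one polynomial. -/
lemma sq_le (h : IsOrthonormalFor L p κ M) (q : ℝ[X]) (n : ℕ) : L (q * p n) ^ 2 ≤ L (q * q) := by
  set c := L (q * p n)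
  have h1 := h.nonneg (q - c • p n)
  have h2 : (q - c • p n) * (q - c • p n) = q * q - (2 * c) • (q * p n) + (c ^ 2) • (p n * p n) := by
    simp only [smul_eq_C_mul, map_mul, map_pow, map_ofNat]; ring
  rw [h2, map_add, map_sub, map_smul, map_smul, h.orth, if_pos rfl] at h1
  simp only [smul_eq_mul] at h1
  nlinarith

lemma X_mul_sq_le (h : IsOrthonormalFor L p κ M) (n m : ℕ) : |L (X * p n * p m)| ≤ M := by
  refine abs_le_of_sq_le_sq ((h.sq_le _ _).trans ((h.bound _).trans ?_)) h.M_pos.le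
  rw [h.orth, if_pos rfl, mul_one]

lemma jacA_pos (h : IsOrthonormalFor L p κ M) (n : ℕ) : 0 < jacA L p n := by
  rw [h.jacA_eq]; exact div_pos (h.pos _) (h.pos _)

lemma jacA_le (h : IsOrthonormalFor L p κ M) (n : ℕ) : jacA L p n ≤ M :=
  (le_abs_self _).trans (h.X_mul_sq_le _ _)

lemma jacB_le (h : IsOrthonormalFor L p κ M) (n : ℕ) : |jacB L p n| ≤ M := h.X_mul_sq_le _ _

/-- The quadratic form of the truncated Jacobi matrix. -/
lemma form_eq (h : IsOrthonormalFor L p κ M) (v : ℕ → ℝ) (N : ℕ) :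
    L (X * ((∑ n ∈ Finset.range (N + 1), v n • p n) * (∑ n ∈ Finset.range (N + 1), v n • p n)))
      = ∑ n ∈ Finset.range (N + 1), jacB L p n * v n ^ 2
        + 2 * ∑ n ∈ Finset.range N, jacA L p n * v n * v (n + 1) := by
  induction N with
  | zero =>
    simp only [zero_add, Finset.sum_range_one, Finset.sum_range_zero, mul_zero, add_zero, jacB]
    rw [show X * (v 0 • p 0 * v 0 • p 0) = (v 0 ^ 2) • (X * p 0 * p 0) by
      simp only [smul_eq_C_mul, map_pow]; ring, map_smul, smul_eq_mul, mul_comm]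
  | succ N ih =>
    rw [Finset.sum_range_succ _ (N + 1), Finset.sum_range_succ (fun n => jacB L p n * v n ^ 2),
      Finset.sum_range_succ (fun n => jacA L p n * v n * v (n + 1)) N]
    set q := ∑ n ∈ Finset.range (N + 1), v n • p n with hq
    have hx : L (X * q * p (N + 1)) = v N * jacA L p N := by
      rw [hq, Finset.sum_range_succ, mul_add, add_mul, map_add, Finset.mul_sum, Finset.sum_mul,
        map_sum, Finset.sum_eq_zero fun i hi => by
          rw [mul_smul_comm, smul_mul_assoc, map_smul,
            h.X_mul_orth (by have := Finset.mem_range.1 hi; omega), smul_zero],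
        mul_smul_comm, smul_mul_assoc, map_smul, smul_eq_mul, zero_add, jacA]
    have hexp : X * ((q + v (N + 1) • p (N + 1)) * (q + v (N + 1) • p (N + 1)))
        = X * (q * q) + (2 * v (N + 1)) • (X * q * p (N + 1))
          + (v (N + 1) ^ 2) • (X * p (N + 1) * p (N + 1)) := by
      simp only [smul_eq_C_mul, map_mul, map_pow, map_ofNat]; ring
    rw [hexp, map_add, map_add, map_smul, map_smul, ih, hx, smul_eq_mul, smul_eq_mul,
      ← show jacB L p (N + 1) = L (X * p (N + 1) * p (N + 1)) from rfl]
    ring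

end IsOrthonormalFor

/-! ### The Cesàro–Nevai property -/

/-- Regularity bounds the geometric mean of the off-diagonal Jacobi coefficients from below:
`∑_{n < N} log a n` telescopes to `log κ₀ - log κ_N`. -/
lemma cesaroNonpos_neg_log {L : ℝ[X] →ₗ[ℝ] ℝ} {p : ℕ → ℝ[X]} {κ : ℕ → ℝ} {M : ℝ}
    (h : IsOrthonormalFor L p κ M)
    (hreg : Tendsto (fun n : ℕ => (κ n) ^ ((n : ℝ)⁻¹)) atTop (𝓝 1)) :
    CesaroNonpos fun n => -Real.log (jacA L p n) := by
  have hlog : Tendsto (fun n : ℕ => (n : ℝ)⁻¹ * Real.log (κ n)) atTop (𝓝 0) := by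
    have h1 := (Real.continuousAt_log one_ne_zero).tendsto.comp hreg
    rw [Real.log_one] at h1
    refine h1.congr fun n => ?_
    simp only [Function.comp]
    rw [Real.log_rpow (h.pos n)]
  intro ε hε
  filter_upwards [hlog.eventually (gt_mem_nhds (half_pos hε)), eventually_gt_atTop 0,
    CesaroNonpos.eventually_const_le (-Real.log (κ 0)) (ε / 2) (half_pos hε)] with N h1 h2 h3
  have hN : (0 : ℝ) < N := by exact_mod_cast h2
  have h4 : ∑ n ∈ Finset.range N, -Real.log (jacA L p n) = Real.log (κ N) - Real.log (κ 0) := by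
    rw [← Finset.sum_range_sub (fun n => Real.log (κ n))]
    refine Finset.sum_congr rfl fun n _ => ?_
    rw [h.jacA_eq, Real.log_div (h.pos _).ne' (h.pos _).ne']
    ring
  rw [h4]
  have h5 : Real.log (κ N) < ε / 2 * N := by
    have := mul_lt_mul_of_pos_right h1 hN
    rwa [mul_comm (N : ℝ)⁻¹, mul_assoc, inv_mul_cancel₀ hN.ne', mul_one] at this
  linarith

/-- The bound `σ J ≤ 2 + o(1)` for the Jacobi matrix `J`, tested on the vector
`(v 0, …, v (N - 1))`. The summand keeps the boundary term containing `v N`, which is bounded. -/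
def FormBound (L : ℝ[X] →ₗ[ℝ] ℝ) (p : ℕ → ℝ[X]) : Prop :=
  ∀ σ : ℝ, (σ = 1 ∨ σ = -1) → ∀ v : ℕ → ℝ, (∀ n, |v n| ≤ 2) →
    CesaroNonpos fun n =>
      σ * jacB L p n * v n ^ 2 + 2 * σ * jacA L p n * v n * v (n + 1) - 2 * v n ^ 2

section

variable {L : ℝ[X] →ₗ[ℝ] ℝ} {p : ℕ → ℝ[X]} {κ : ℕ → ℝ} {M : ℝ}

lemma FormBound.pos (hF : FormBound L p) :
    CesaroNonpos fun n => jacB L p n + 2 * jacA L p n - 2 :=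
  (hF 1 (Or.inl rfl) (fun _ => 1) (by simp)).mono fun n => by simp

lemma FormBound.neg (hF : FormBound L p) :
    CesaroNonpos fun n => -jacB L p n + 2 * jacA L p n - 2 :=
  (hF (-1) (Or.inr rfl) (fun n => (-1) ^ n) (by simp)).mono fun n => by
    have h1 : ((-1 : ℝ) ^ n) ^ 2 = 1 := by rw [← pow_mul, mul_comm, pow_mul]; simp
    have h2 : (-1 : ℝ) ^ n * (-1) ^ (n + 1) = -1 := by
      rw [pow_succ, ← mul_assoc, ← sq, h1]; ring
    rw [mul_assoc _ ((-1 : ℝ) ^ n), h2, h1]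
    linarith

/-- The arithmetic mean of the `a n` is asymptotically at most `1`, their geometric mean tends
to `1`; near equality in the inequality between these means gives the claim. -/
lemma cesaro_jacA (h : IsOrthonormalFor L p κ M) (hF : FormBound L p)
    (hlog : CesaroNonpos fun n => -Real.log (jacA L p n)) :
    CesaroNonpos fun n => (jacA L p n - 1) ^ 2 := by
  have h1 := (((hF.pos.add hF.neg).const_mul (c := 1 / 4) (by norm_num)).add hlog).const_mul
    (c := (√M + 1) ^ 2) (by positivity)
  refine h1.mono fun n => ?_
  set a := jacA L p n
  have ha : 0 < a := h.jacA_pos n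
  obtain ⟨u, hu, hua⟩ : ∃ u : ℝ, 0 < u ∧ a = u ^ 2 := ⟨√a, Real.sqrt_pos.2 ha, (Real.sq_sqrt ha.le).symm⟩
  have huM : u ≤ √M := Real.le_sqrt_of_sq_le (hua ▸ h.jacA_le n)
  have hl : Real.log a ≤ 2 * (u - 1) := by
    rw [hua, Real.log_pow]
    have := Real.log_le_sub_one_of_pos hu
    push_cast
    linarith
  calc (a - 1) ^ 2 = (u + 1) ^ 2 * (u - 1) ^ 2 := by rw [hua]; ring
    _ ≤ (√M + 1) ^ 2 * (u - 1) ^ 2 := by gcongr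
    _ ≤ _ := by
      refine mul_le_mul_of_nonneg_left ?_ (by positivity)
      have : (u - 1) ^ 2 = a - 1 - 2 * (u - 1) := by rw [hua]; ring
      linarith

/-- Perturbing the constant test vector to `1 + δ s` with `s n = ± 1` the sign of `b n` costs only
`O(δ²)` in the free part of the form, but gains `2 δ |b n|`. -/
lemma cesaro_jacB (h : IsOrthonormalFor L p κ M) (hF : FormBound L p)
    (hA : CesaroNonpos fun n => (jacA L p n - 1) ^ 2) :
    CesaroNonpos fun n => jacB L p n ^ 2 := by
  have hA1 : CesaroNonpos fun n => |jacA L p n - 1| := hA.of_sq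
  have hBneg : CesaroNonpos fun n => -jacB L p n :=
    (hF.neg.add (hA1.const_mul (c := 2) (by norm_num))).mono fun n => by
      linarith [neg_abs_le (jacA L p n - 1)]
  have hB1 : CesaroNonpos fun n => |jacB L p n| := by
    refine CesaroNonpos.of_approx fun t ht ht1 => ?_
    set δ := t / 2 with hδ
    have hδ0 : 0 < δ := half_pos ht
    have hδ1 : δ ≤ 1 / 2 := by linarith
    set s : ℕ → ℝ := fun n => if 0 ≤ jacB L p n then 1 else -1 with hs
    have hs2 : ∀ n, s n = 1 ∨ s n = -1 := fun n => by
      simp only [hs]; split_ifs <;> simp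
    have hsb : ∀ n, s n * jacB L p n = |jacB L p n| := fun n => by
      simp only [hs]
      split_ifs with h0
      · rw [one_mul, abs_of_nonneg h0]
      · rw [abs_of_neg (not_le.1 h0)]; ring
    set v : ℕ → ℝ := fun n => 1 + δ * s n with hv
    have hv0 : ∀ n, 0 ≤ v n := fun n => by
      simp only [hv]; rcases hs2 n with h0 | h0 <;> rw [h0] <;> linarith
    have hv2 : ∀ n, v n ≤ 2 := fun n => by
      simp only [hv]; rcases hs2 n with h0 | h0 <;> rw [h0] <;> linarith
    have h3 := hF 1 (Or.inl rfl) v fun n => by rw [abs_of_nonneg (hv0 n)]; exact hv2 n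
    have h4 : CesaroNonpos fun n => v n ^ 2 - v (n + 1) ^ 2 := by
      refine CesaroNonpos.of_sum_le 4 fun N => ?_
      rw [Finset.sum_range_sub']
      nlinarith [hv0 0, hv2 0, sq_nonneg (v N)]
    refine ⟨_, (((h3.add (hBneg.const_mul (c := 1 + δ ^ 2) (by positivity))).add
      (hA1.const_mul (c := 8) (by norm_num))).add h4).const_mul (c := 1 / (2 * δ)) (by positivity),
      fun n => ?_⟩
    have key : 2 * δ * |jacB L p n| ≤ 2 * δ * t + (1 * jacB L p n * v n ^ 2
        + 2 * 1 * jacA L p n * v n * v (n + 1) - 2 * v n ^ 2 + (1 + δ ^ 2) * -jacB L p n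
        + 8 * |jacA L p n - 1| + (v n ^ 2 - v (n + 1) ^ 2)) := by
      have e1 : jacB L p n * v n ^ 2 = (1 + δ ^ 2) * jacB L p n + 2 * δ * |jacB L p n| := by
        have hss : s n ^ 2 = 1 := by rcases hs2 n with h0 | h0 <;> rw [h0] <;> norm_num
        rw [← hsb]
        simp only [hv]
        linear_combination δ ^ 2 * jacB L p n * hss
      have e2 : (v n - v (n + 1)) ^ 2 ≤ 2 * δ * t := by
        have h5 : t = 2 * δ := by rw [hδ]; ring
        have h6 : (s n - s (n + 1)) ^ 2 ≤ 4 := by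
          rcases hs2 n with h0 | h0 <;> rcases hs2 (n + 1) with h00 | h00 <;> rw [h0, h00] <;>
            norm_num
        have h7 : (v n - v (n + 1)) ^ 2 = δ ^ 2 * (s n - s (n + 1)) ^ 2 := by
          simp only [hv]; ring
        rw [h7, h5]
        nlinarith [sq_nonneg δ]
      have e3 : -(8 * |jacA L p n - 1|) ≤ 2 * (jacA L p n - 1) * (v n * v (n + 1)) := by
        have h8 : v n * v (n + 1) ≤ 4 := by
          nlinarith [hv0 n, hv2 n, hv0 (n + 1), hv2 (n + 1)]
        have h9 : 0 ≤ v n * v (n + 1) := mul_nonneg (hv0 _) (hv0 _)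
        nlinarith [neg_abs_le (jacA L p n - 1), abs_nonneg (jacA L p n - 1),
          mul_le_mul_of_nonneg_left h8 (abs_nonneg (jacA L p n - 1)),
          mul_le_mul_of_nonneg_right (neg_abs_le (jacA L p n - 1)) h9]
      nlinarith
    have h2δ : 0 < 2 * δ := by positivity
    refine le_of_mul_le_mul_left (key.trans_eq ?_) h2δ
    rw [mul_add (2 * δ) t, ← mul_assoc (2 * δ) (1 / (2 * δ)), mul_one_div_cancel h2δ.ne']
    ring
  refine (hB1.const_mul h.M_pos.le).mono fun n => ?_
  rw [← sq_abs, sq]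
  exact mul_le_mul_of_nonneg_right (h.jacB_le n) (abs_nonneg _)

/-! ### Chebyshev polynomials act asymptotically as sums of two shifts -/

/-- The defect in `C_k pₙ ≈ pₙ₊ₖ + pₙ₋ₖ`, where `C_k (z + z⁻¹) = z ^ k + z ^ (-k)` is the rescaled
Chebyshev polynomial. The subtraction `n - k` is truncated; only `k ≤ n` matters. -/
def defect (p : ℕ → ℝ[X]) (k n : ℕ) : ℝ[X] :=
  Chebyshev.C ℝ k * p n - p (n + k) - p (n - k)

lemma IsOrthonormalFor.sq_sum4_le (h : IsOrthonormalFor L p κ M) (f g r s : ℝ[X]) :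
    L ((f + g + r - s) * (f + g + r - s))
      ≤ 4 * (L (f * f) + L (g * g) + L (r * r) + L (s * s)) := by
  have e : (4 : ℝ) • (f * f + g * g + r * r + s * s) - (f + g + r - s) * (f + g + r - s)
      = (f - g) * (f - g) + (f - r) * (f - r) + (f + s) * (f + s) + (g - r) * (g - r)
        + (g + s) * (g + s) + (r + s) * (r + s) := by
    simp only [smul_eq_C_mul, map_ofNat]; ring
  have h1 := congrArg L e
  simp only [map_add, map_sub, map_smul, smul_eq_mul] at h1
  linarith [h.nonneg (f - g), h.nonneg (f - r), h.nonneg (f + s), h.nonneg (g - r),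
    h.nonneg (g + s), h.nonneg (r + s)]

lemma cesaro_defect_one (h : IsOrthonormalFor L p κ M)
    (hA : CesaroNonpos fun n => (jacA L p n - 1) ^ 2)
    (hB : CesaroNonpos fun n => jacB L p n ^ 2) :
    CesaroNonpos fun n => L (defect p 1 n * defect p 1 n) := by
  refine ((hA.add hB).add (hA.shift_sub (fun n => sq_nonneg _) 1)).mono_of_le 1 fun n hn => ?_
  obtain ⟨n, rfl⟩ := Nat.exists_eq_add_of_le' hn
  have e : defect p 1 (n + 1) * defect p 1 (n + 1)
      = ((jacA L p (n + 1) - 1) ^ 2) • (p (n + 2) * p (n + 2))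
        + (jacB L p (n + 1) ^ 2) • (p (n + 1) * p (n + 1))
        + ((jacA L p n - 1) ^ 2) • (p n * p n)
        + (2 * (jacA L p (n + 1) - 1) * jacB L p (n + 1)) • (p (n + 2) * p (n + 1))
        + (2 * (jacA L p (n + 1) - 1) * (jacA L p n - 1)) • (p (n + 2) * p n)
        + (2 * jacB L p (n + 1) * (jacA L p n - 1)) • (p (n + 1) * p n) := by
    rw [defect, Nat.cast_one, Chebyshev.C_one, h.recurrence n]
    simp only [smul_eq_C_mul, map_mul, map_pow, map_sub, map_one, map_ofNat, add_tsub_cancel_right]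
    ring
  rw [e]
  simp [h.orth]

lemma cesaro_defect (h : IsOrthonormalFor L p κ M)
    (h1 : CesaroNonpos fun n => L (defect p 1 n * defect p 1 n)) (k : ℕ) :
    CesaroNonpos fun n => L (defect p k n * defect p k n) := by
  induction k using Nat.twoStepInduction with
  | zero =>
    refine CesaroNonpos.of_sum_le 0 fun N => (Finset.sum_eq_zero fun n _ => ?_).le
    have : defect p 0 n = 0 := by
      rw [defect, Nat.cast_zero, Chebyshev.C_zero, add_zero, tsub_zero]; ring
    rw [this]; simp
  | one => exact h1
  | more k ih ih1 =>
    have hnn : ∀ k n, 0 ≤ L (defect p k n * defect p k n) := fun k n => h.nonneg _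
    refine ((((ih1.const_mul (sq_nonneg M)).add (h1.shift_add (hnn 1) (k + 1))).add
      (h1.shift_sub (hnn 1) (k + 1))).add ih).const_mul (c := 4) (by norm_num)
        |>.mono_of_le (k + 2) fun n hn => ?_
    obtain ⟨m, rfl⟩ := Nat.exists_eq_add_of_le' hn
    have e : defect p (k + 2) (m + (k + 2)) = X * defect p (k + 1) (m + (k + 2))
        + defect p 1 (m + (k + 2) + (k + 1)) + defect p 1 (m + (k + 2) - (k + 1))
        - defect p k (m + (k + 2)) := by
      simp only [defect]
      push_cast
      rw [Chebyshev.C_add_two, Chebyshev.C_one,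
        show m + (k + 2) - (k + 1) = m + 1 by omega, show m + (k + 2) - (k + 2) = m by omega,
        show m + (k + 2) - k = m + 2 by omega, show m + 1 - 1 = m by omega,
        show m + (k + 2) + (k + 1) + 1 = m + (k + 2) + (k + 2) by omega,
        show m + (k + 2) + (k + 1) - 1 = m + (k + 2) + k by omega]
      ring
    rw [e]
    refine (h.sq_sum4_le _ _ _ _).trans ?_
    have hb := h.bound (defect p (k + 1) (m + (k + 2)))
    linarith

lemma cesaro_moment (h : IsOrthonormalFor L p κ M)
    (h1 : CesaroNonpos fun n => L (defect p 1 n * defect p 1 n)) (k : ℕ) (hk : k ≠ 0) :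
    CesaroNonpos fun n => L (Chebyshev.C ℝ k * p n * p n) ^ 2 := by
  refine (cesaro_defect h h1 k).mono_of_le k fun n hn => ?_
  have e : L (Chebyshev.C ℝ k * p n * p n) = L (defect p k n * p n) := by
    rw [defect, sub_mul, sub_mul, map_sub, map_sub, h.orth, h.orth, if_neg (by omega),
      if_neg (by omega)]
    ring
  rw [e]
  exact h.sq_le _ _

end

/-! ### Mass points and the form bound -/

/-- At a point carrying mass `w` the values `pₙ(x)` are square summable, so that a combination
`∑_{n < N} v n pₙ(x)` with bounded coefficients is `o(√N)`. -/
lemma eventually_eval_sq_le {L : ℝ[X] →ₗ[ℝ] ℝ} {p : ℕ → ℝ[X]} {κ : ℕ → ℝ} {M : ℝ}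
    (h : IsOrthonormalFor L p κ M) {x w : ℝ} (hw : 0 ≤ w)
    (hx : ∀ q : ℝ[X], q.eval x ^ 2 * w ≤ L (q * q)) {v : ℕ → ℝ} (hv : ∀ n, |v n| ≤ 2)
    {η : ℝ} (hη : 0 < η) :
    ∀ᶠ N : ℕ in atTop, (∑ n ∈ Finset.range N, v n • p n).eval x ^ 2 * w ≤ η * N := by
  rcases hw.eq_or_lt with rfl | hw
  · exact Eventually.of_forall fun N => by rw [mul_zero]; positivity
  set c : ℕ → ℝ := fun n => (p n).eval x with hc
  have hT : ∀ N, ∑ n ∈ Finset.range N, c n ^ 2 ≤ 1 / w := by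
    intro N
    have h1 := hx (∑ n ∈ Finset.range N, c n • p n)
    rw [h.sum_sq, eval_finsetSum] at h1
    have h1' : (∑ n ∈ Finset.range N, c n ^ 2) ^ 2 * w ≤ ∑ n ∈ Finset.range N, c n ^ 2 := by
      simpa only [eval_smul, smul_eq_mul, sq (c _)] using h1
    set T := ∑ n ∈ Finset.range N, c n ^ 2 with hTdef
    have hT0 : 0 ≤ T := Finset.sum_nonneg fun n _ => sq_nonneg _
    rw [le_div_iff₀ hw]
    rcases hT0.eq_or_lt with h0 | h0
    · rw [← h0]; simp
    · refine le_of_mul_le_mul_left ?_ h0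
      linarith
  have hs : Summable fun n => c n ^ 2 := summable_of_sum_range_le (fun n => sq_nonneg _) hT
  have hlim := hs.hasSum.tendsto_sum_nat
  set S := ∑' n, c n ^ 2
  set η' := η / (16 * w) with hη'
  have hη'0 : 0 < η' := by positivity
  obtain ⟨N₀, hN₀⟩ := (hlim.eventually (lt_mem_nhds (show S - η' < S by linarith))).exists
  set A := ∑ n ∈ Finset.range N₀, v n * c n with hA
  filter_upwards [eventually_ge_atTop N₀,
    CesaroNonpos.eventually_const_le (2 * A ^ 2 * w) (η / 2) (half_pos hη)] with N h1 h2
  have e : (∑ n ∈ Finset.range N, v n • p n).eval x = A + ∑ n ∈ Finset.Ico N₀ N, v n * c n := by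
    rw [hA, Finset.sum_range_add_sum_Ico _ h1, eval_finsetSum]
    simp [hc]
  set B := ∑ n ∈ Finset.Ico N₀ N, v n * c n with hB
  have hB2 : B ^ 2 ≤ 4 * N * η' := by
    refine (Finset.sum_mul_sq_le_sq_mul_sq _ _ _).trans ?_
    have h3 : ∑ n ∈ Finset.Ico N₀ N, v n ^ 2 ≤ 4 * N := by
      calc ∑ n ∈ Finset.Ico N₀ N, v n ^ 2 ≤ ∑ n ∈ Finset.Ico N₀ N, (4 : ℝ) := by
            refine Finset.sum_le_sum fun n _ => ?_
            rw [← sq_abs]; nlinarith [hv n, abs_nonneg (v n)]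
        _ = ((N - N₀ : ℕ) : ℝ) * 4 := by simp
        _ ≤ 4 * N := by
          have : ((N - N₀ : ℕ) : ℝ) ≤ N := by exact_mod_cast Nat.sub_le _ _
          linarith
    have h4 : ∑ n ∈ Finset.Ico N₀ N, c n ^ 2 ≤ η' := by
      have h5 := Finset.sum_range_add_sum_Ico (fun n => c n ^ 2) h1
      have h6 : ∑ n ∈ Finset.range N, c n ^ 2 ≤ S := hs.sum_le_tsum _ fun n _ => sq_nonneg _
      linarith
    exact mul_le_mul h3 h4 (Finset.sum_nonneg fun n _ => sq_nonneg _) (by positivity)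
  rw [e]
  calc (A + B) ^ 2 * w ≤ (2 * A ^ 2 + 2 * (4 * N * η')) * w := by
        gcongr
        nlinarith [sq_nonneg (A - B)]
    _ = 2 * A ^ 2 * w + η / 2 * N := by rw [hη']; field_simp; ring
    _ ≤ η * N := by linarith

lemma measSupport_eq (μ : Measure ℝ) : measSupport μ = μ.support := by
  ext x
  simp only [measSupport, Measure.mem_support_iff_forall, pos_iff_ne_zero]
  rfl

section

variable {μ : Measure ℝ}

lemma ae_mem_measSupport : ∀ᵐ x ∂μ, x ∈ measSupport μ := by
  rw [measSupport_eq]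
  exact Measure.support_mem_ae

lemma integrable_of_continuous [IsFiniteMeasure μ] (hc : IsCompact (measSupport μ)) {f : ℝ → ℝ}
    (hf : Continuous f) : Integrable f μ := by
  have h1 : IntegrableOn f (measSupport μ) μ := hf.continuousOn.integrableOn_compact hc
  rwa [IntegrableOn, Measure.restrict_eq_self_of_ae_mem ae_mem_measSupport] at h1

/-- The moment functional `q ↦ ∫ q dμ`. -/
def momentFunctional (μ : Measure ℝ) [IsFiniteMeasure μ] (hc : IsCompact (measSupport μ)) :
    ℝ[X] →ₗ[ℝ] ℝ where
  toFun q := ∫ x, q.eval x ∂μ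
  map_add' q r := by
    simp only [eval_add]
    exact integral_add (integrable_of_continuous hc q.continuous)
      (integrable_of_continuous hc r.continuous)
  map_smul' c q := by
    simp only [eval_smul, smul_eq_mul, RingHom.id_apply]
    exact integral_const_mul _ _

lemma momentFunctional_apply [IsFiniteMeasure μ] (hc : IsCompact (measSupport μ)) (q : ℝ[X]) :
    momentFunctional μ hc q = ∫ x, q.eval x ∂μ := rfl

lemma isOrthonormalFor [IsFiniteMeasure μ] (hc : IsCompact (measSupport μ)) {M : ℝ} (hM : 0 < M)
    (hKM : ∀ x ∈ measSupport μ, |x| ≤ M) {p : ℕ → ℝ[X]} {κ : ℕ → ℝ}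
    (hON : OrthonormalPolysR μ p κ) : IsOrthonormalFor (momentFunctional μ hc) p κ M where
  nonneg q := by
    rw [momentFunctional_apply]
    exact integral_nonneg fun x => by simp only [eval_mul]; exact mul_self_nonneg _
  bound q := by
    simp only [momentFunctional_apply]
    rw [← integral_const_mul]
    refine integral_mono_ae (integrable_of_continuous hc (Polynomial.continuous _))
      ((integrable_of_continuous hc (Polynomial.continuous _)).const_mul _) ?_
    filter_upwards [ae_mem_measSupport] with x hx
    simp only [eval_mul, eval_X]
    have h1 : x ^ 2 ≤ M ^ 2 := sq_le_sq' (by linarith [neg_abs_le x, hKM x hx])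
      ((le_abs_self x).trans (hKM x hx))
    nlinarith [mul_le_mul_of_nonneg_right h1 (mul_self_nonneg (q.eval x))]
  orth n m := by
    rw [momentFunctional_apply]
    simp only [eval_mul]
    exact hON.2.2.2 n m
  deg := hON.1
  lead := hON.2.2.1
  pos := hON.2.1
  M_pos := hM

lemma eval_sq_mul_le [IsFiniteMeasure μ] (hc : IsCompact (measSupport μ)) (x : ℝ) (q : ℝ[X]) :
    q.eval x ^ 2 * μ.real {x} ≤ momentFunctional μ hc (q * q) := by
  have h1 : ∫ y in {x}, (q * q).eval y ∂μ = q.eval x ^ 2 * μ.real {x} := by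
    rw [integral_singleton, smul_eq_mul, eval_mul, sq, mul_comm]
  rw [← h1, momentFunctional_apply]
  exact setIntegral_le_integral (integrable_of_continuous hc (Polynomial.continuous _))
    (Eventually.of_forall fun y => by simp only [eval_mul]; exact mul_self_nonneg _)

/-- Only finitely many points of the support lie beyond `2 + ε` (for `σ = 1`) or below `-2 - ε` (for
`σ = -1`): infinitely many would accumulate outside `[-2, 2]`. -/
lemma finite_outliers (hc : IsCompact (measSupport μ))
    (hess : {x : ℝ | AccPt x (𝓟 (measSupport μ))} = Set.Icc (-2) 2) {ε : ℝ} (hε : 0 < ε) {σ : ℝ}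
    (hσ : σ = 1 ∨ σ = -1) : (measSupport μ ∩ {x | 2 + ε ≤ σ * x}).Finite := by
  by_contra hinf
  have hcl : IsClosed {x : ℝ | 2 + ε ≤ σ * x} :=
    isClosed_le continuous_const (continuous_const.mul continuous_id)
  obtain ⟨z, hz, hacc⟩ := Set.Infinite.exists_accPt_of_subset_isCompact hinf
    (hc.inter_right hcl) Set.Subset.rfl
  have h1 : z ∈ {x : ℝ | AccPt x (𝓟 (measSupport μ))} :=
    hacc.mono (principal_mono.2 Set.inter_subset_left)
  rw [hess] at h1
  have h2 : 2 + ε ≤ σ * z := hz.2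
  rcases hσ with rfl | rfl <;> linarith [h1.1, h1.2]

/-- The form bound: the part of the spectrum beyond `2 + ε` consists of finitely many mass points,
and these contribute only `o(N)`. -/
lemma formBound [IsFiniteMeasure μ] (hc : IsCompact (measSupport μ))
    (hess : {x : ℝ | AccPt x (𝓟 (measSupport μ))} = Set.Icc (-2) 2) {M : ℝ}
    (hKM : ∀ x ∈ measSupport μ, |x| ≤ M) {p : ℕ → ℝ[X]} {κ : ℕ → ℝ}
    (h : IsOrthonormalFor (momentFunctional μ hc) p κ M) :
    FormBound (momentFunctional μ hc) p := by
  intro σ hσ v hv η hη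
  set L := momentFunctional μ hc with hL
  have hM := h.M_pos
  -- the error budget: `4 ε` from the threshold, `η / 2` from all mass points together
  set ε := η / 16 with hε
  have hε0 : 0 < ε := by positivity
  have hfin := finite_outliers hc hess hε0 hσ
  set F := hfin.toFinset with hF
  set η' := η / (2 * M * (F.card + 1)) with hη'
  have hη'0 : 0 < η' := by positivity
  have hpts : ∀ᶠ N : ℕ in atTop, ∀ y ∈ F,
      (∑ n ∈ Finset.range N, v n • p n).eval y ^ 2 * μ.real {y} ≤ η' * N :=
    (Filter.eventually_all_finset F).2 fun y _ =>
      eventually_eval_sq_le h measureReal_nonneg (eval_sq_mul_le hc y) hv hη'0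
  filter_upwards [hpts, eventually_gt_atTop 0,
    CesaroNonpos.eventually_const_le (8 * M) (η / 4) (by positivity)] with N h1 h2 h3
  set q := ∑ n ∈ Finset.range N, v n • p n with hq
  have hup : σ * L (X * (q * q)) ≤ (2 + ε) * L (q * q) + M * ∑ y ∈ F, q.eval y ^ 2 * μ.real {y} := by
    have i1 : Integrable (fun x => (q * q).eval x) μ :=
      integrable_of_continuous hc (Polynomial.continuous _)
    have i2 : ∀ y ∈ F, Integrable (Set.indicator {y} fun x => (q * q).eval x) μ := fun y _ =>
      i1.indicator (measurableSet_singleton y)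
    have e1 : ∀ y ∈ F, ∫ x, Set.indicator {y} (fun x => (q * q).eval x) x ∂μ
        = q.eval y ^ 2 * μ.real {y} := fun y _ => by
      rw [integral_indicator (measurableSet_singleton y), integral_singleton, smul_eq_mul, eval_mul,
        sq, mul_comm]
    rw [← Finset.sum_congr rfl e1, ← integral_finsetSum _ i2, hL, momentFunctional_apply,
      momentFunctional_apply, ← integral_const_mul, ← integral_const_mul, ← integral_const_mul,
      ← integral_add (i1.const_mul _) ((integrable_finsetSum _ i2).const_mul _)]
    refine integral_mono_ae
      ((integrable_of_continuous hc (Polynomial.continuous _)).const_mul _)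
      ((i1.const_mul _).add ((integrable_finsetSum _ i2).const_mul _)) ?_
    filter_upwards [ae_mem_measSupport] with x hx
    have hnn : ∀ z, 0 ≤ (q * q).eval z := fun z => by rw [eval_mul]; exact mul_self_nonneg _
    have hnn2 : ∀ y ∈ F, 0 ≤ Set.indicator {y} (fun x => (q * q).eval x) x := fun y _ =>
      Set.indicator_nonneg (fun z _ => hnn z) x
    rw [eval_mul (p := X), eval_X, ← mul_assoc]
    by_cases hxσ : 2 + ε ≤ σ * x
    · have hxF : x ∈ F := by rw [hF, Set.Finite.mem_toFinset]; exact ⟨hx, hxσ⟩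
      have h4 := Finset.single_le_sum hnn2 hxF
      rw [Set.indicator_of_mem (Set.mem_singleton x)] at h4
      have h5 : σ * x ≤ M := by
        have := hKM x hx
        rcases hσ with rfl | rfl <;> linarith [le_abs_self x, neg_abs_le x]
      have h6 := mul_le_mul_of_nonneg_right h5 (hnn x)
      have h7 := mul_le_mul_of_nonneg_left h4 hM.le
      have h8 := mul_nonneg (show (0 : ℝ) ≤ 2 + ε by positivity) (hnn x)
      linarith
    · have h6 := mul_le_mul_of_nonneg_right (not_le.1 hxσ).le (hnn x)
      have h7 := mul_nonneg hM.le (Finset.sum_nonneg hnn2)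
      linarith
  have hsum : M * ∑ y ∈ F, q.eval y ^ 2 * μ.real {y} ≤ η / 2 * N := by
    have h4 : ∑ y ∈ F, q.eval y ^ 2 * μ.real {y} ≤ F.card * (η' * N) := by
      rw [← nsmul_eq_mul]
      exact Finset.sum_le_card_nsmul _ _ _ h1
    calc M * ∑ y ∈ F, q.eval y ^ 2 * μ.real {y} ≤ M * ((F.card + 1) * (η' * N)) := by
          gcongr
          refine h4.trans ?_
          gcongr
          linarith
      _ = η / 2 * N := by rw [hη']; field_simp
  have hLq : L (q * q) = ∑ n ∈ Finset.range N, v n ^ 2 := h.sum_sq v N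
  have hv2 : ∑ n ∈ Finset.range N, v n ^ 2 ≤ 4 * N := by
    calc ∑ n ∈ Finset.range N, v n ^ 2 ≤ ∑ n ∈ Finset.range N, (4 : ℝ) := by
          refine Finset.sum_le_sum fun n _ => ?_
          rw [← sq_abs]; nlinarith [hv n, abs_nonneg (v n)]
      _ = 4 * N := by simp [mul_comm]
  obtain ⟨m, rfl⟩ := Nat.exists_eq_add_of_le' h2
  have hform : L (X * (q * q)) = _ := h.form_eq v m
  -- the form of size `N` lacks the boundary term `a (N - 1) * v (N - 1) * v N`
  have hbd : 2 * σ * jacA L p m * v m * v (m + 1) ≤ 8 * M := by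
    have h4 : |2 * σ * jacA L p m * v m * v (m + 1)| ≤ 2 * 1 * M * 2 * 2 := by
      simp only [abs_mul]
      have hs : |σ| = 1 := by rcases hσ with rfl | rfl <;> simp
      have ha : |jacA L p m| ≤ M := h.X_mul_sq_le _ _
      rw [hs, abs_two]
      gcongr
      · exact hv m
      · exact hv (m + 1)
    linarith [le_abs_self (2 * σ * jacA L p m * v m * v (m + 1))]
  have hcomb : ∑ n ∈ Finset.range (m + 1), (σ * jacB L p n * v n ^ 2
      + 2 * σ * jacA L p n * v n * v (n + 1) - 2 * v n ^ 2)
      = σ * L (X * (q * q)) + 2 * σ * jacA L p m * v m * v (m + 1) - 2 * L (q * q) := by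
    rw [hform, hLq, Finset.sum_sub_distrib, Finset.sum_add_distrib,
      Finset.sum_range_succ (fun n => 2 * σ * jacA L p n * v n * v (n + 1))]
    simp only [mul_assoc, ← Finset.mul_sum]
    ring
  rw [hcomb]
  have h9 : ε * L (q * q) ≤ η / 4 * (m + 1 : ℕ) := by
    rw [hLq]
    calc ε * ∑ n ∈ Finset.range (m + 1), v n ^ 2 ≤ ε * (4 * (m + 1 : ℕ)) := by gcongr
      _ = η / 4 * (m + 1 : ℕ) := by rw [hε]; ring
  linarith

end

/-! ### The equilibrium measure -/

lemma equilibrium_eq_cos (f : ℝ → ℝ) :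
    ∫ x in (-2 : ℝ)..2, f x / (Real.pi * √(4 - x ^ 2))
      = Real.pi⁻¹ * ∫ θ in (0 : ℝ)..Real.pi, f (2 * Real.cos θ) := by
  have h1 := intervalIntegral.mul_integral_comp_mul_left (a := (-1 : ℝ)) (b := 1)
    (f := fun x => f x / (Real.pi * √(4 - x ^ 2))) (c := 2)
  rw [mul_one, mul_neg_one] at h1
  rw [← h1, ← Chebyshev.integral_measureT_eq_integral_cos (f := fun x => f (2 * x)),
    Chebyshev.integral_measureT, ← intervalIntegral.integral_const_mul,
    ← intervalIntegral.integral_const_mul]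
  refine intervalIntegral.integral_congr fun x _ => ?_
  have h2 : √(4 - (2 * x) ^ 2) = 2 * √(1 - x ^ 2) := by
    rw [show 4 - (2 * x) ^ 2 = 2 ^ 2 * (1 - x ^ 2) by ring, Real.sqrt_mul (by norm_num),
      Real.sqrt_sq (by norm_num)]
  simp only [h2]
  rw [Real.sqrt_inv, div_eq_mul_inv, mul_inv, mul_inv]
  ring

/-- Integration against the equilibrium measure of `[-2, 2]`, written in the coordinate
`x = 2 cos θ`, as a functional on polynomials. -/
def equilibriumFunctional : ℝ[X] →ₗ[ℝ] ℝ where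
  toFun q := Real.pi⁻¹ * ∫ θ in (0 : ℝ)..Real.pi, q.eval (2 * Real.cos θ)
  map_add' q r := by
    simp only [eval_add]
    rw [intervalIntegral.integral_add, mul_add]
    · exact (q.continuous.comp (by fun_prop)).intervalIntegrable _ _
    · exact (r.continuous.comp (by fun_prop)).intervalIntegrable _ _
  map_smul' c q := by
    simp only [eval_smul, smul_eq_mul, RingHom.id_apply, intervalIntegral.integral_const_mul]
    ring

lemma equilibriumFunctional_C {k : ℕ} (hk : k ≠ 0) :
    equilibriumFunctional (Chebyshev.C ℝ k) = 0 := by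
  have h1 := Chebyshev.integral_eval_T_real_measureT_of_ne_zero (n := k) (by exact_mod_cast hk)
  rw [Chebyshev.integral_measureT_eq_integral_cos] at h1
  have h2 : ∀ x : ℝ, (Chebyshev.C ℝ k).eval (2 * x) = 2 * (Chebyshev.T ℝ k).eval x := fun x => by
    have := congrArg (eval x) (Chebyshev.C_comp_two_mul_X ℝ (k : ℤ))
    simpa using this
  simp only [equilibriumFunctional, LinearMap.coe_mk, AddHom.coe_mk, h2,
    intervalIntegral.integral_const_mul, h1, mul_zero]

lemma equilibriumFunctional_one : equilibriumFunctional 1 = 1 := by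
  simp [equilibriumFunctional, Real.pi_ne_zero]

/-- The polynomials `C_k` span all polynomials. -/
lemma span_chebyshev : Submodule.span ℝ (Set.range fun k : ℕ => Chebyshev.C ℝ (k : ℤ)) = ⊤ := by
  set S := Submodule.span ℝ (Set.range fun k : ℕ => Chebyshev.C ℝ (k : ℤ))
  have hmem : ∀ k : ℕ, Chebyshev.C ℝ (k : ℤ) ∈ S := fun k => Submodule.subset_span ⟨k, rfl⟩
  have hX : ∀ q ∈ S, X * q ∈ S := by
    intro q hq
    induction hq using Submodule.span_induction with
    | mem q hq =>
      obtain ⟨k, rfl⟩ := hq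
      have e : X * Chebyshev.C ℝ (k : ℤ) = Chebyshev.C ℝ (k + 1) + Chebyshev.C ℝ (k - 1) := by
        rw [Chebyshev.C_add_one]; ring
      show X * Chebyshev.C ℝ (k : ℤ) ∈ S
      rw [e]
      refine S.add_mem (by exact_mod_cast hmem (k + 1)) ?_
      rw [← Chebyshev.C_natAbs]
      exact hmem _
    | zero => simp
    | add q r _ _ h1 h2 => rw [mul_add]; exact S.add_mem h1 h2
    | smul c q _ h1 => rw [mul_smul_comm]; exact S.smul_mem _ h1
  have h1 : (1 : ℝ[X]) ∈ S := by
    have h2 := S.smul_mem (1 / 2 : ℝ) (hmem 0)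
    rw [Nat.cast_zero, Chebyshev.C_zero, smul_eq_C_mul,
      show (2 : ℝ[X]) = C 2 from (map_ofNat C 2).symm, ← C_mul] at h2
    norm_num at h2
    exact h2
  have hpow : ∀ n : ℕ, (X ^ n : ℝ[X]) ∈ S := by
    intro n
    induction n with
    | zero => simpa using h1
    | succ n ih => rw [pow_succ']; exact hX _ ih
  refine eq_top_iff.2 fun q _ => ?_
  rw [q.as_sum_range_C_mul_X_pow]
  exact S.sum_mem fun n _ => by rw [← smul_eq_C_mul]; exact S.smul_mem _ (hpow n)

/-! ### Conclusion -/

lemma tendsto_polynomial {L : ℝ[X] →ₗ[ℝ] ℝ} {p : ℕ → ℝ[X]} {κ : ℕ → ℝ} {M : ℝ}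
    (h : IsOrthonormalFor L p κ M) {l : Filter ℕ}
    (hl : ∀ k : ℕ, Tendsto (fun n => L (Chebyshev.C ℝ (k + 1 : ℕ) * p n * p n) ^ 2) l (𝓝 0))
    (q : ℝ[X]) :
    Tendsto (fun n => L (q * p n * p n)) l (𝓝 (equilibriumFunctional q)) := by
  have hq : q ∈ Submodule.span ℝ (Set.range fun k : ℕ => Chebyshev.C ℝ (k : ℤ)) := by
    rw [span_chebyshev]; trivial
  induction hq using Submodule.span_induction with
  | mem q hq =>
    obtain ⟨k, rfl⟩ := hq
    rcases k with _ | k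
    · have e : Chebyshev.C ℝ ((0 : ℕ) : ℤ) = (2 : ℝ) • 1 := by
        rw [Nat.cast_zero, Chebyshev.C_zero, smul_eq_C_mul, mul_one, map_ofNat]
      simp only [e, map_smul, equilibriumFunctional_one, smul_mul_assoc, one_mul, h.orth, if_true]
      exact tendsto_const_nhds
    · rw [equilibriumFunctional_C (Nat.succ_ne_zero k)]
      have h1 := (Real.continuous_sqrt.tendsto 0).comp (hl k)
      rw [Real.sqrt_zero] at h1
      refine (tendsto_zero_iff_abs_tendsto_zero _).2 (h1.congr fun n => ?_)
      simp only [Function.comp, Real.sqrt_sq_eq_abs]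
  | zero => simpa using tendsto_const_nhds
  | add q r _ _ h1 h2 =>
    simp only [add_mul, map_add]
    exact h1.add h2
  | smul c q _ h1 =>
    simp only [smul_mul_assoc, map_smul]
    exact h1.const_smul c

theorem real_weak_convergence_to_equilibrium_along_density_one
    (μ : Measure ℝ) [IsFiniteMeasure μ]
    (hc : IsCompact (measSupport μ)) (hi : (measSupport μ).Infinite)
    (hess : {x : ℝ | AccPt x (𝓟 (measSupport μ))} = Set.Icc (-2) 2)
    (p : ℕ → Polynomial ℝ) (κ : ℕ → ℝ) (hON : OrthonormalPolysR μ p κ)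
    (hreg : Tendsto (fun n : ℕ => (κ n) ^ ((n : ℝ)⁻¹)) atTop (𝓝 1)) :
    ∃ 𝒩 : Set ℕ, hasDensityOne 𝒩 ∧
      ∀ f : BoundedContinuousFunction ℝ ℝ,
        Tendsto (fun n => ∫ x, f x * ((p n).eval x) ^ 2 ∂μ) (atTop ⊓ 𝓟 𝒩)
          (𝓝 (∫ x in (-2 : ℝ)..2, f x / (Real.pi * Real.sqrt (4 - x ^ 2)))) := by
  obtain ⟨R, hR⟩ := hc.isBounded.subset_closedBall 0
  set M := max R 2
  have hM2 : 2 ≤ M := le_max_right _ _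
  have hKM : ∀ x ∈ measSupport μ, |x| ≤ M := fun x hx => by
    have := hR hx
    rw [Metric.mem_closedBall, Real.dist_0_eq_abs] at this
    exact this.trans (le_max_left _ _)
  have h := isOrthonormalFor hc (by linarith) hKM hON
  have hF := formBound hc hess hKM h
  have hA := cesaro_jacA h hF (cesaroNonpos_neg_log h hreg)
  have hE := cesaro_defect_one h hA (cesaro_jacB h hF hA)
  obtain ⟨S, hS, hlim⟩ := exists_density_one_of_countable
    (fun k n => sq_nonneg (momentFunctional μ hc (Chebyshev.C ℝ (k + 1 : ℕ) * p n * p n)))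
    fun k => cesaro_moment h hE (k + 1) (Nat.succ_ne_zero k)
  refine ⟨S, hS, fun f => ?_⟩
  rw [equilibrium_eq_cos, Metric.tendsto_nhds]
  intro ε hε
  obtain ⟨q, hq⟩ := exists_polynomial_near_of_continuousOn (-M) M f f.continuous.continuousOn
    (ε / 4) (by positivity)
  have hpi := Real.pi_pos
  have hq1 : |Real.pi⁻¹ * (∫ θ in (0 : ℝ)..Real.pi, f (2 * Real.cos θ))
      - equilibriumFunctional q| ≤ ε / 4 := by
    have e : Real.pi⁻¹ * (∫ θ in (0 : ℝ)..Real.pi, f (2 * Real.cos θ)) - equilibriumFunctional q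
        = Real.pi⁻¹ * ∫ θ in (0 : ℝ)..Real.pi, (f (2 * Real.cos θ) - q.eval (2 * Real.cos θ)) := by
      rw [intervalIntegral.integral_sub, mul_sub]
      · rfl
      · exact (f.continuous.comp (by fun_prop)).intervalIntegrable _ _
      · exact (q.continuous.comp (by fun_prop)).intervalIntegrable _ _
    have h1 : ‖∫ θ in (0 : ℝ)..Real.pi, (f (2 * Real.cos θ) - q.eval (2 * Real.cos θ))‖
        ≤ ε / 4 * |Real.pi - 0| := by
      refine intervalIntegral.norm_integral_le_of_norm_le_const fun θ _ => ?_
      rw [Real.norm_eq_abs, abs_sub_comm]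
      exact (hq _ ⟨by linarith [Real.neg_one_le_cos θ], by linarith [Real.cos_le_one θ]⟩).le
    rw [e, abs_mul, abs_of_pos (inv_pos.2 hpi), inv_mul_le_iff₀ hpi]
    rw [sub_zero, abs_of_pos hpi, Real.norm_eq_abs] at h1
    linarith
  have hq2 : ∀ n, |(∫ x, f x * ((p n).eval x) ^ 2 ∂μ) - momentFunctional μ hc (q * p n * p n)|
      ≤ ε / 4 := by
    intro n
    have i1 : Integrable (fun x => f x * ((p n).eval x) ^ 2) μ :=
      integrable_of_continuous hc (f.continuous.mul ((p n).continuous.pow 2))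
    have i2 : Integrable (fun x => (q * p n * p n).eval x) μ :=
      integrable_of_continuous hc (Polynomial.continuous _)
    have i3 : Integrable (fun x => (p n * p n).eval x) μ :=
      integrable_of_continuous hc (Polynomial.continuous _)
    rw [momentFunctional_apply, ← integral_sub i1 i2, ← Real.norm_eq_abs]
    refine (norm_integral_le_of_norm_le (i3.const_mul (ε / 4)) ?_).trans_eq ?_
    · filter_upwards [ae_mem_measSupport] with x hx
      have h1 := hq x (abs_le.1 (hKM x hx))
      have e : f x * ((p n).eval x) ^ 2 - (q * p n * p n).eval x
          = (f x - q.eval x) * (p n * p n).eval x := by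
        simp only [eval_mul]; ring
      have h2 : 0 ≤ (p n * p n).eval x := by rw [eval_mul]; exact mul_self_nonneg _
      rw [e, Real.norm_eq_abs, abs_mul, abs_of_nonneg h2, abs_sub_comm]
      exact mul_le_mul_of_nonneg_right h1.le h2
    · rw [integral_const_mul, ← momentFunctional_apply hc, h.orth, if_pos rfl, mul_one]
  filter_upwards [Metric.tendsto_nhds.1 (tendsto_polynomial h hlim q) (ε / 4) (by positivity)]
    with n hn
  rw [Real.dist_eq] at hn ⊢
  have h1 := hq2 n
  rw [abs_le] at h1 hq1
  rw [abs_lt] at hn ⊢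
  constructor <;> linarith [h1.1, h1.2, hq1.1, hq1.2, hn.1, hn.2]
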